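/- Let $u$ be a real-valued harmonic function on the unit disk $D = \{(x,y) : x^2 + y^2 < 1\}$ satisfying $\int_D |u(x,y)|^2 \, dx\,dy < \infty$. Then for every point of $D$ written in polar coordinates as $(r, \theta)$ with $0 \le r < 1$: $u(r,\theta) = -u(0) + \frac{2}{\pi} \int_0^1 \int_0^{2\pi} u(\rho, \phi) \, \frac{1 - 2r\rho\cos(\theta - \phi) + r^2\rho^2 \cos 2(\theta - \phi)}{\left(1 - 2r\rho\cos(\theta - \phi) + r^2\rho^2\right)^2} \, d\phi \, \rho \, d\rho$, where $u(0)$ is the value of $u$ at the origin. -/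

import Mathlib

/-!
On the unit disk write `u = Re F` with `F` holomorphic. Put `w = r e^{iθ}`, `ζ = ρ e^{iφ}`,
`a = ρ² w` with `0 < ρ < 1`. The kernel is the real part of
`1 / (1 - w ζ̄)² = (ζ / (ζ - a))²`, whose conjugate on the circle `|ζ| = ρ` is `1 / (1 - w̄ ζ)²`.
Cauchy's formula for the derivative of `ζ F(ζ)` at `a`, and the mean value property of the
holomorphic function `F(ζ) / (1 - w̄ ζ)²`, evaluate the angular integral of `F` against the kernel as
`π (F(a) + a F'(a) + F(0))` (`integral_mul_kernel`).

Multiplied by `ρ`, this is the `ρ`-derivative of `(π / 2) ρ² (F(ρ² w) + F(0))`, a function which is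
continuously differentiable on `[0, 1]` because `|w| < 1`. The radial integral is therefore
`(π / 2) (F(w) + F(0))`, and taking real parts gives the formula.
-/

open MeasureTheory Real

/-- The Laplacian of a function `u : ℂ → ℝ`, computed as the sum of the two pure
second directional derivatives in the coordinate directions `1` and `I`:
`Δu = ∂²u/∂x² + ∂²u/∂y²`. -/
noncomputable def laplacian (u : ℂ → ℝ) (z : ℂ) : ℝ :=
  iteratedFDeriv ℝ 2 u z ![1, 1] + iteratedFDeriv ℝ 2 u z ![Complex.I, Complex.I]

open Metric

lemma exists_holomorphic_re_eq (u : ℂ → ℝ) (hu : ContDiffOn ℝ 2 u (ball (0 : ℂ) 1))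
    (hharm : ∀ z ∈ ball (0 : ℂ) 1, laplacian u z = 0) :
    ∃ F : ℂ → ℂ, DifferentiableOn ℂ F (ball 0 1) ∧ ∀ z ∈ ball (0 : ℂ) 1, (F z).re = u z := by
  have h : InnerProductSpace.HarmonicOnNhd u (ball (0 : ℂ) 1) := by
    intro x hx
    refine ⟨hu.contDiffAt (isOpen_ball.mem_nhds hx), ?_⟩
    filter_upwards [isOpen_ball.mem_nhds hx] with z hz
    rw [InnerProductSpace.laplacian_eq_iteratedFDeriv_complexPlane]
    exact hharm z hz
  obtain ⟨F, hF, hFu⟩ := h.exists_analyticOnNhd_ball_re_eq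
  exact ⟨F, hF.differentiableOn, hFu⟩

lemma integral_circleMap_eq {H : ℂ → ℂ} {ρ : ℝ} (hρ : 0 < ρ)
    (hH : DifferentiableOn ℂ H (closedBall 0 ρ)) :
    ∫ φ in (0:ℝ)..(2 * π), H (circleMap 0 ρ φ) = 2 * π * H 0 := by
  have h := (hH.diffContOnCl_ball subset_rfl).circleIntegral_sub_inv_smul (mem_ball_self hρ)
  rw [circleIntegral] at h
  have h2 : ∀ φ : ℝ, deriv (circleMap 0 ρ) φ •
      ((circleMap 0 ρ φ - 0)⁻¹ • H (circleMap 0 ρ φ)) = Complex.I * H (circleMap 0 ρ φ) := by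
    intro φ
    have : circleMap 0 ρ φ ≠ 0 := circleMap_ne_center hρ.ne'
    simp only [deriv_circleMap, smul_eq_mul, sub_zero]
    field_simp
  simp only [h2] at h
  rw [intervalIntegral.integral_const_mul] at h
  apply mul_left_cancel₀ Complex.I_ne_zero
  rw [h, smul_eq_mul]
  ring

/-- Cauchy's formula for the derivative of `ζ F(ζ)` at `a`, as an angular integral. -/
lemma integral_circleMap_mul_sq {F : ℂ → ℂ} (hF : DifferentiableOn ℂ F (ball 0 1))
    {ρ : ℝ} (hρ1 : ρ < 1) {a : ℂ} (ha : a ∈ ball (0 : ℂ) ρ) :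
    ∫ φ in (0:ℝ)..(2 * π), F (circleMap 0 ρ φ) * (circleMap 0 ρ φ / (circleMap 0 ρ φ - a)) ^ 2
      = 2 * π * (F a + a * deriv F a) := by
  have h := Complex.two_pi_I_inv_smul_circleIntegral_sub_sq_inv_smul_of_differentiable
    (f := fun z => z * F z) isOpen_ball (closedBall_subset_ball hρ1)
    (differentiableOn_id.mul hF) ha
  have hFa : DifferentiableAt ℂ F a :=
    hF.differentiableAt (isOpen_ball.mem_nhds (ball_subset_ball hρ1.le ha))
  have hd : deriv (fun z => z * F z) a = F a + a * deriv F a := by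
    simpa using ((hasDerivAt_id' a).fun_mul hFa.hasDerivAt).deriv
  rw [hd, circleIntegral] at h
  have h2 : ∀ φ : ℝ, deriv (circleMap 0 ρ) φ •
      (((circleMap 0 ρ φ - a) ^ 2)⁻¹ • (circleMap 0 ρ φ * F (circleMap 0 ρ φ)))
      = Complex.I * (F (circleMap 0 ρ φ) *
          (circleMap 0 ρ φ / (circleMap 0 ρ φ - a)) ^ 2) := by
    intro φ
    simp only [deriv_circleMap, smul_eq_mul, div_pow]
    ring
  simp only [h2] at h
  rw [intervalIntegral.integral_const_mul, smul_eq_mul] at h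
  rw [← h]
  field_simp [Complex.I_ne_zero, Complex.ofReal_ne_zero.2 pi_ne_zero]

/-- On the circle of radius `ρ` the kernel is the average of a function of `ζ` with a double pole at
`ρ² r e^{iθ}` and of a function holomorphic in the disk, conjugate to each other on the circle. -/
lemma kernel_eq (r θ ρ φ : ℝ) (hr0 : 0 ≤ r) (hr1 : r < 1) (hρ : 0 < ρ) (hρ1 : ρ < 1) :
    (((1 - 2 * r * ρ * cos (θ - φ) + r ^ 2 * ρ ^ 2 * cos (2 * (θ - φ))) /
        (1 - 2 * r * ρ * cos (θ - φ) + r ^ 2 * ρ ^ 2) ^ 2 : ℝ) : ℂ) =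
      ((circleMap 0 ρ φ / (circleMap 0 ρ φ - ρ ^ 2 * circleMap 0 r θ)) ^ 2 +
        ((1 - circleMap 0 r (-θ) * circleMap 0 ρ φ)⁻¹) ^ 2) / 2 := by
  set z := circleMap 0 (r * ρ) (θ - φ) with hz
  set z' := circleMap 0 (r * ρ) (φ - θ) with hz'
  have hζ : circleMap 0 ρ φ ≠ 0 := circleMap_ne_center hρ.ne'
  have hmul : ∀ (s t x y : ℝ), circleMap 0 s x * circleMap 0 t y = circleMap 0 (s * t) (x + y) := by
    intro s t x y
    simp only [circleMap, zero_add, Complex.ofReal_mul, Complex.ofReal_add, add_mul, Complex.exp_add]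
    ring
  have hnorm : r * ρ < 1 := by nlinarith
  have h1 : (1 : ℂ) - z ≠ 0 := by
    intro h
    have : ‖z‖ = 1 := by rw [← sub_eq_zero.1 h]; simp
    rw [hz, norm_circleMap_zero, abs_of_nonneg (by positivity)] at this
    linarith
  have h1' : (1 : ℂ) - z' ≠ 0 := by
    intro h
    have : ‖z'‖ = 1 := by rw [← sub_eq_zero.1 h]; simp
    rw [hz', norm_circleMap_zero, abs_of_nonneg (by positivity)] at this
    linarith
  have e1 : circleMap 0 ρ φ / (circleMap 0 ρ φ - ρ ^ 2 * circleMap 0 r θ) = (1 - z)⁻¹ := by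
    have : (ρ : ℂ) ^ 2 * circleMap 0 r θ = circleMap 0 ρ φ * z := by
      rw [hz, hmul]
      simp [circleMap]
      ring
    rw [this, show circleMap 0 ρ φ - circleMap 0 ρ φ * z = circleMap 0 ρ φ * (1 - z) by ring]
    field_simp
  have e2 : circleMap 0 r (-θ) * circleMap 0 ρ φ = z' := by
    rw [hz', hmul]; congr 1; ring
  have hsum : z + z' = 2 * r * ρ * cos (θ - φ) := by
    rw [hz, hz', Complex.ofReal_cos, Complex.cos]
    simp only [circleMap, zero_add]
    push_cast
    rw [show (φ - θ : ℂ) * Complex.I = -(θ - φ) * Complex.I by ring]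
    ring
  have hprod : z * z' = r ^ 2 * ρ ^ 2 := by
    rw [hz, hz', hmul]
    simp [circleMap]
    ring
  have hcos : ((cos (2 * (θ - φ)) : ℝ) : ℂ) = 2 * (cos (θ - φ) : ℝ) ^ 2 - 1 := by
    rw [cos_two_mul]; push_cast; ring
  rw [e1, e2, Complex.ofReal_div]
  have hden : (((1 - 2 * r * ρ * cos (θ - φ) + r ^ 2 * ρ ^ 2) ^ 2 : ℝ) : ℂ)
      = ((1 - z) * (1 - z')) ^ 2 := by
    push_cast
    rw [← hprod]
    linear_combination (-(1 - 2 * r * ρ * Complex.cos (θ - φ) + z * z') -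
      (1 - z) * (1 - z')) * (by push_cast at hsum; linear_combination -hsum :
        (2 * r * ρ * Complex.cos (θ - φ) - (z + z') : ℂ) = 0)
  have hnum : ((1 - 2 * r * ρ * cos (θ - φ) + r ^ 2 * ρ ^ 2 * cos (2 * (θ - φ)) : ℝ) : ℂ)
      = ((1 - z) ^ 2 + (1 - z') ^ 2) / 2 := by
    rw [Complex.ofReal_add, Complex.ofReal_mul, hcos]
    push_cast at hsum ⊢
    linear_combination (1 - (z + z' + 2 * r * ρ * Complex.cos (θ - φ)) / 2) * hsum + hprod
  rw [hnum, hden]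
  field_simp
  ring

lemma integral_mul_kernel {F : ℂ → ℂ} (hF : DifferentiableOn ℂ F (ball 0 1))
    (r θ ρ : ℝ) (hr0 : 0 ≤ r) (hr1 : r < 1) (hρ : 0 < ρ) (hρ1 : ρ < 1) :
    ∫ φ in (0:ℝ)..(2 * π), (F (circleMap 0 ρ φ) *
        (((1 - 2 * r * ρ * cos (θ - φ) + r ^ 2 * ρ ^ 2 * cos (2 * (θ - φ))) /
          (1 - 2 * r * ρ * cos (θ - φ) + r ^ 2 * ρ ^ 2) ^ 2 : ℝ) : ℂ)) =
      π * (F (ρ ^ 2 * circleMap 0 r θ)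
        + ρ ^ 2 * circleMap 0 r θ * deriv F (ρ ^ 2 * circleMap 0 r θ) + F 0) := by
  have ha : (ρ : ℂ) ^ 2 * circleMap 0 r θ ∈ ball (0 : ℂ) ρ := by
    rw [mem_ball_zero_iff, norm_mul, norm_circleMap_zero, norm_pow, Complex.norm_real,
      norm_eq_abs, abs_of_pos hρ, abs_of_nonneg hr0]
    nlinarith [mul_pos hρ hρ]
  have hne : ∀ z ∈ closedBall (0 : ℂ) ρ, 1 - circleMap 0 r (-θ) * z ≠ 0 := by
    intro z hz h
    have h1 : ‖circleMap 0 r (-θ) * z‖ = 1 := by rw [← sub_eq_zero.1 h]; simp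
    rw [norm_mul, norm_circleMap_zero, abs_of_nonneg hr0] at h1
    rw [mem_closedBall_zero_iff] at hz
    nlinarith [norm_nonneg z]
  have hFc : DifferentiableOn ℂ F (closedBall 0 ρ) := hF.mono (closedBall_subset_ball hρ1)
  have hH : DifferentiableOn ℂ (fun z => F z * ((1 - circleMap 0 r (-θ) * z)⁻¹) ^ 2)
      (closedBall 0 ρ) := by
    refine hFc.mul (DifferentiableOn.pow (DifferentiableOn.inv ?_ hne) 2)
    fun_prop
  have hA := integral_circleMap_mul_sq hF hρ1 ha
  have hB := integral_circleMap_eq hρ hH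
  have hmem : ∀ φ, circleMap 0 ρ φ ∈ closedBall (0 : ℂ) ρ :=
    fun φ => circleMap_mem_closedBall 0 hρ.le φ
  have hFcont : Continuous fun φ => F (circleMap 0 ρ φ) :=
    hFc.continuousOn.comp_continuous (continuous_circleMap 0 ρ) hmem
  have hBi : Continuous fun φ =>
      F (circleMap 0 ρ φ) * ((1 - circleMap 0 r (-θ) * circleMap 0 ρ φ)⁻¹) ^ 2 :=
    hH.continuousOn.comp_continuous (continuous_circleMap 0 ρ) hmem
  have hAi : Continuous fun φ => F (circleMap 0 ρ φ) *
      (circleMap 0 ρ φ / (circleMap 0 ρ φ - ρ ^ 2 * circleMap 0 r θ)) ^ 2 := by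
    refine hFcont.mul (((continuous_circleMap 0 ρ).div
      ((continuous_circleMap 0 ρ).sub continuous_const) ?_).pow 2)
    intro φ h
    rw [Pi.sub_apply] at h
    rw [mem_ball_zero_iff, ← sub_eq_zero.1 h, norm_circleMap_zero, abs_of_pos hρ] at ha
    exact lt_irrefl _ ha
  have hsplit : ∀ φ : ℝ, F (circleMap 0 ρ φ) *
        (((1 - 2 * r * ρ * cos (θ - φ) + r ^ 2 * ρ ^ 2 * cos (2 * (θ - φ))) /
          (1 - 2 * r * ρ * cos (θ - φ) + r ^ 2 * ρ ^ 2) ^ 2 : ℝ) : ℂ) =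
      (1 / 2) * (F (circleMap 0 ρ φ) *
          (circleMap 0 ρ φ / (circleMap 0 ρ φ - ρ ^ 2 * circleMap 0 r θ)) ^ 2 +
        F (circleMap 0 ρ φ) * ((1 - circleMap 0 r (-θ) * circleMap 0 ρ φ)⁻¹) ^ 2) := by
    intro φ
    rw [kernel_eq r θ ρ φ hr0 hr1 hρ hρ1]
    ring
  simp only [hsplit]
  rw [intervalIntegral.integral_const_mul, intervalIntegral.integral_add
    (hAi.intervalIntegrable _ _) (hBi.intervalIntegrable _ _), hA, hB]
  simp
  ring

/-- **Reproducing formula for the harmonic Bergman space `hA²`**: if `u` is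
harmonic on the unit disk with `∫_D |u|² < ∞`, then for any point `r e^{iθ}` of
the disk, `u` is reproduced (up to subtracting `u(0)`) by the kernel
`Q(t,ψ) = (1 - 2t cos ψ + t² cos 2ψ)/(1 - 2t cos ψ + t²)²`. -/
theorem harmonic_bergman_representation (u : ℂ → ℝ)
    (hu : ContDiffOn ℝ 2 u (Metric.ball (0 : ℂ) 1))
    (hharm : ∀ z ∈ Metric.ball (0 : ℂ) 1, laplacian u z = 0)
    (hint : IntegrableOn (fun z : ℂ => |u z| ^ 2) (Metric.ball (0 : ℂ) 1) volume)
    (r θ : ℝ) (hr0 : 0 ≤ r) (hr1 : r < 1) :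
    u ((r : ℂ) * Complex.exp ((θ : ℂ) * Complex.I)) =
      -u 0 + (2 / π) *
        ∫ ρ in (0:ℝ)..1, (∫ φ in (0:ℝ)..(2 * π),
          u ((ρ : ℂ) * Complex.exp ((φ : ℂ) * Complex.I)) *
            ((1 - 2 * r * ρ * cos (θ - φ) + r ^ 2 * ρ ^ 2 * cos (2 * (θ - φ))) /
              (1 - 2 * r * ρ * cos (θ - φ) + r ^ 2 * ρ ^ 2) ^ 2)) * ρ := by
  obtain ⟨F, hF, hFu⟩ := exists_holomorphic_re_eq u hu hharm
  set w : ℂ := circleMap 0 r θ with hw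
  have hw1 : ‖w‖ < 1 := by rwa [hw, norm_circleMap_zero, abs_of_nonneg hr0]
  have hmem : ∀ ρ ∈ Set.Icc (0:ℝ) 1, (ρ : ℂ) ^ 2 * w ∈ ball (0 : ℂ) 1 := by
    intro ρ hρ
    rw [mem_ball_zero_iff, norm_mul, norm_pow, Complex.norm_real, norm_eq_abs, abs_of_nonneg hρ.1]
    have : ρ ^ 2 ≤ 1 := pow_le_one₀ hρ.1 hρ.2
    nlinarith [norm_nonneg w]
  -- the `ρ`-derivative of `(π / 2) ρ² (F(ρ² w) + F(0))`
  set g : ℝ → ℂ := fun ρ => π * (F (ρ ^ 2 * w) + ρ ^ 2 * w * deriv F (ρ ^ 2 * w) + F 0) * ρ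
    with hg
  have hgc : ContinuousOn g (Set.Icc 0 1) := by
    have hm : ContinuousOn (fun ρ : ℝ => (ρ : ℂ) ^ 2 * w) (Set.Icc 0 1) := by fun_prop
    have c1 := hF.continuousOn.comp hm hmem
    have c2 := (hF.deriv isOpen_ball).continuousOn.comp hm hmem
    have c3 : ContinuousOn (fun ρ : ℝ => (ρ : ℂ)) (Set.Icc 0 1) := by fun_prop
    exact (continuousOn_const.mul ((c1.add (hm.mul c2)).add continuousOn_const)).mul c3
  have hgi : IntervalIntegrable g volume 0 1 := by
    apply ContinuousOn.intervalIntegrable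
    rwa [Set.uIcc_of_le zero_le_one]
  have hgint : ∫ ρ in (0:ℝ)..1, g ρ = π / 2 * (F w + F 0) := by
    have hder : ∀ ρ ∈ Set.uIcc (0:ℝ) 1, HasDerivAt
        (fun ρ : ℝ => (π / 2 : ℂ) * ((ρ : ℂ) ^ 2 * (F ((ρ : ℂ) ^ 2 * w) + F 0))) (g ρ) ρ := by
      intro ρ hρ
      rw [Set.uIcc_of_le zero_le_one] at hρ
      have hFd : HasDerivAt F (deriv F ((ρ : ℂ) ^ 2 * w)) ((ρ : ℂ) ^ 2 * w) :=
        (hF.differentiableAt (isOpen_ball.mem_nhds (hmem ρ hρ))).hasDerivAt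
      have hsq : HasDerivAt (fun x : ℂ => x ^ 2) (2 * (ρ : ℂ)) (ρ : ℂ) := by
        simpa using hasDerivAt_pow 2 (ρ : ℂ)
      have h1 := HasDerivAt.comp (ρ : ℂ) hFd (hsq.mul_const w)
      have h2 := ((hsq.fun_mul (h1.add_const (F 0))).const_mul (π / 2 : ℂ)).comp_ofReal
      refine HasDerivAt.congr_deriv h2 ?_
      simp only [hg, Function.comp]
      ring
    rw [intervalIntegral.integral_eq_sub_of_hasDerivAt hder hgi]
    simp
  have hinner : Set.EqOn (fun ρ : ℝ => (∫ φ in (0:ℝ)..(2 * π),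
          u ((ρ : ℂ) * Complex.exp ((φ : ℂ) * Complex.I)) *
            ((1 - 2 * r * ρ * cos (θ - φ) + r ^ 2 * ρ ^ 2 * cos (2 * (θ - φ))) /
              (1 - 2 * r * ρ * cos (θ - φ) + r ^ 2 * ρ ^ 2) ^ 2)) * ρ)
      (fun ρ => (g ρ).re) (Set.Ioo 0 1) := by
    intro ρ hρ
    have hk := integral_mul_kernel hF r θ ρ hr0 hr1 hρ.1 hρ.2
    have hcirc : ∀ φ : ℝ, circleMap 0 ρ φ ∈ ball (0 : ℂ) 1 := fun φ => by
      rw [mem_ball_zero_iff, norm_circleMap_zero, abs_of_pos hρ.1]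
      exact hρ.2
    have hkc : Continuous fun φ : ℝ => F (circleMap 0 ρ φ) *
        (((1 - 2 * r * ρ * cos (θ - φ) + r ^ 2 * ρ ^ 2 * cos (2 * (θ - φ))) /
          (1 - 2 * r * ρ * cos (θ - φ) + r ^ 2 * ρ ^ 2) ^ 2 : ℝ) : ℂ) := by
      refine (hF.continuousOn.comp_continuous (continuous_circleMap 0 ρ) hcirc).mul
        (Complex.continuous_ofReal.comp (Continuous.div (by fun_prop) (by fun_prop) ?_))
      intro φ
      -- the denominator is at least `(1 - r ρ)⁴`
      have hp : 0 < 1 - r * ρ := by nlinarith [hρ.1, hρ.2]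
      have := cos_le_one (θ - φ)
      have h0 : 0 ≤ r * ρ := mul_nonneg hr0 hρ.1.le
      have : 0 < 1 - 2 * r * ρ * cos (θ - φ) + r ^ 2 * ρ ^ 2 := by
        nlinarith [mul_pos hp hp, mul_nonneg h0 (sub_nonneg.2 this)]
      positivity
    have hre := Complex.reCLM.intervalIntegral_comp_comm (hkc.intervalIntegrable 0 (2 * π)
      (μ := volume))
    rw [hk] at hre
    simp only [Complex.reCLM_apply, Complex.re_mul_ofReal] at hre
    simp only [hg, Complex.re_mul_ofReal]
    rw [← hre]
    congr 1
    refine intervalIntegral.integral_congr fun φ _ => ?_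
    simp only [hFu _ (hcirc φ)]
    simp [circleMap]
  rw [intervalIntegral.integral_congr_Ioo_of_le zero_le_one hinner]
  have hre := Complex.reCLM.intervalIntegral_comp_comm hgi
  rw [hgint] at hre
  simp only [Complex.reCLM_apply] at hre
  have hval : ((π / 2 : ℂ) * (F w + F 0)).re = π / 2 * (u w + u 0) := by
    rw [← hFu w (by simpa using hw1), ← hFu 0 (by simp), ← Complex.add_re,
      ← Complex.re_ofReal_mul]
    simp
  rw [hre, hval, show (r : ℂ) * Complex.exp ((θ : ℂ) * Complex.I) = w by simp [hw, circleMap]]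
  field_simp
  ring
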